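/- Let R be a ring, N an R-module, f: A → B an R-linear map, and g: B → C an injective R-linear map such that g ∘ f is injective, Ext^i_R(coker (g ∘ f), N) = 0 for all i ≥ 1, and Ext^i_R(coker g, N) = 0 for all i ≥ 1. Then f is injective and Ext^i_R(coker f, N) = 0 for all i ≥ 1. (Coherence of the class of monomorphisms whose cokernel lies in the Ext-orthogonality class of N.) -/

import Mathlib

open CategoryTheory

universe u

namespace Paper

/-- `Ext^i_R(X, N) = 0` for all `i ≥ 1`, where `Ext` denotes the right derived functors of
`Hom` computed in the abelian category of `R`-modules. -/
def ExtVanishes (R : Type u) [Ring R] (X N : Type u)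
    [AddCommGroup X] [Module R X] [AddCommGroup N] [Module R N] : Prop :=
  ∀ i : ℕ, 1 ≤ i →
    Limits.IsZero (((Ext ℤ (ModuleCat.{u} R) i).obj
      (Opposite.op (ModuleCat.of R X))).obj (ModuleCat.of R N))

/-!
For a monomorphism `g : B ⟶ C` the kernel-cokernel sequence of `f : A ⟶ B` and `g` reduces to the
short exact sequence `0 ⟶ coker f ⟶ coker (f ≫ g) ⟶ coker g ⟶ 0`. In its long exact sequence,
`Ext^i (coker f, N)` sits between `Ext^i (coker (f ≫ g), N)` and `Ext^(i+1) (coker g, N)`.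
-/

universe v w

section Abelian

open Limits

variable {C : Type*} [Category.{v} C] [Abelian C]

section Comparison

variable {R : Type*} [Ring R] [EnoughProjectives C] [Linear R C] {X : C}

lemma isZero_ext_succ_iff_exists_d_comp_eq (P : ProjectiveResolution X) (Y : C) (n : ℕ) :
    IsZero (((Ext R C (n + 1)).obj (Opposite.op X)).obj Y) ↔
      ∀ φ : P.complex.X (n + 1) ⟶ Y, P.complex.d (n + 2) (n + 1) ≫ φ = 0 →
        ∃ ψ : P.complex.X n ⟶ Y, P.complex.d (n + 1) n ≫ ψ = φ := by
  rw [(P.isoExt (n + 1) Y).isZero_iff, ← HomologicalComplex.exactAt_iff_isZero_homology,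
    HomologicalComplex.exactAt_iff' _ n (n + 1) (n + 2) (by simp) (by simp),
    ShortComplex.moduleCat_exact_iff]
  rfl

/-- `Ext R C` is a derived functor, whereas Mathlib's long exact sequences are about `Abelian.Ext`,
defined in the derived category; both are computed by projective resolutions. -/
lemma isZero_ext_succ_iff_subsingleton [HasExt.{w} C] (X Y : C) (n : ℕ) :
    IsZero (((Ext R C (n + 1)).obj (Opposite.op X)).obj Y) ↔
      Subsingleton (Abelian.Ext.{w} X Y (n + 1)) := by
  let P := ProjectiveResolution.of X
  rw [isZero_ext_succ_iff_exists_d_comp_eq P]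
  constructor
  · refine fun lift ↦ subsingleton_of_forall_eq 0 fun α ↦ ?_
    obtain ⟨φ, hφ, rfl⟩ := P.extMk_surjective α (n + 2) rfl
    exact (P.extMk_eq_zero_iff φ (n + 2) rfl hφ n rfl).2 (lift φ hφ)
  · exact fun _ φ hφ ↦
      (P.extMk_eq_zero_iff φ (n + 2) rfl hφ n rfl).1 (Subsingleton.elim _ _)

end Comparison

lemma subsingleton_ext_X₁_of_shortExact [HasExt.{w} C] {S : ShortComplex C} (hS : S.ShortExact)
    (Y : C) (n : ℕ) [Subsingleton (Abelian.Ext.{w} S.X₂ Y n)]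
    [Subsingleton (Abelian.Ext.{w} S.X₃ Y (n + 1))] :
    Subsingleton (Abelian.Ext.{w} S.X₁ Y n) := by
  refine subsingleton_of_forall_eq 0 fun α ↦ ?_
  obtain ⟨β, rfl⟩ := Abelian.Ext.contravariant_sequence_exact₁ hS Y α (add_comm 1 n)
    (Subsingleton.elim _ _)
  rw [Subsingleton.elim β 0, Abelian.Ext.comp_zero]

lemma shortExact_cokernel_map_comp {X Y Z : C} (f : X ⟶ Y) (g : Y ⟶ Z) [Mono g] :
    (ShortComplex.mk (cokernel.map f (f ≫ g) (𝟙 X) g (by simp))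
      (cokernel.map (f ≫ g) g f (𝟙 Z) (by simp)) (by ext; simp)).ShortExact where
  exact := (kernelCokernelCompSequence_exact f g).exact 3
  mono_f := ((kernelCokernelCompSequence_exact f g).exact 2).mono_g
    ((isZero_kernel_of_mono g).eq_of_src _ _)
  epi_g := inferInstanceAs (Epi ((kernelCokernelCompSequence f g).map' 4 5))

theorem extVanishes_cokernel_coherent_general {R : Type*} [Ring R] [EnoughProjectives C]
    [Linear R C] {X Y Z : C} (f : X ⟶ Y) (g : Y ⟶ Z) [Mono g] (N : C) (n : ℕ)
    (hfg : IsZero (((Ext R C (n + 1)).obj (Opposite.op (cokernel (f ≫ g)))).obj N))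
    (hg : IsZero (((Ext R C (n + 2)).obj (Opposite.op (cokernel g))).obj N)) :
    IsZero (((Ext R C (n + 1)).obj (Opposite.op (cokernel f))).obj N) := by
  have : HasExt.{v} C := hasExt_of_enoughProjectives.{v} C
  rw [isZero_ext_succ_iff_subsingleton.{v, v}] at hfg hg ⊢
  exact subsingleton_ext_X₁_of_shortExact (shortExact_cokernel_map_comp f g) N (n + 1)

end Abelian

lemma extVanishes_quotient_range_iff {R : Type u} [Ring R] {A B N : Type u}
    [AddCommGroup A] [Module R A] [AddCommGroup B] [Module R B] [AddCommGroup N] [Module R N]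
    (f : A →ₗ[R] B) :
    ExtVanishes R (B ⧸ LinearMap.range f) N ↔
      ∀ n : ℕ, Limits.IsZero (((Ext ℤ (ModuleCat.{u} R) (n + 1)).obj
        (Opposite.op (Limits.cokernel (ModuleCat.ofHom f)))).obj (ModuleCat.of R N)) := by
  have isoExt (i : ℕ) := ((Ext ℤ (ModuleCat.{u} R) i).mapIso
    (ModuleCat.cokernelIsoRangeQuotient (ModuleCat.ofHom f)).op).app (ModuleCat.of R N)
  simp only [(isoExt _).symm.isZero_iff]
  exact ⟨fun h n ↦ h (n + 1) n.succ_pos, fun h i hi ↦ by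
    obtain ⟨n, rfl⟩ := Nat.exists_eq_add_of_le' hi
    exact h n⟩

/-- Coherence of the class of monomorphisms whose cokernel lies in the
Ext-orthogonality class of `N`. -/
theorem extVanishes_cokernel_coherent
    {R : Type u} [Ring R] (N : Type u) [AddCommGroup N] [Module R N]
    {A B C : Type u} [AddCommGroup A] [Module R A] [AddCommGroup B] [Module R B]
    [AddCommGroup C] [Module R C]
    (f : A →ₗ[R] B) (g : B →ₗ[R] C)
    (hg : Function.Injective g) (hgf : Function.Injective (g ∘ₗ f))
    (hgfE : ExtVanishes R (C ⧸ LinearMap.range (g ∘ₗ f)) N)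
    (hgE : ExtVanishes R (C ⧸ LinearMap.range g) N) :
    Function.Injective f ∧ ExtVanishes R (B ⧸ LinearMap.range f) N := by
  have : Mono (ModuleCat.ofHom g) := (ModuleCat.mono_iff_injective _).2 hg
  rw [extVanishes_quotient_range_iff] at hgfE hgE ⊢
  exact ⟨.of_comp hgf, fun n ↦ extVanishes_cokernel_coherent_general
    (ModuleCat.ofHom f) (ModuleCat.ofHom g) (ModuleCat.of R N) n (hgfE n) (hgE (n + 1))⟩

end Paper
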